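/- arXiv:1609.08062 — 3 statements merged into one kernel-verified Lean document; each statement's English description precedes it below -/
import Mathlib

section
/- If S is a stabilizer group in the n-qubit Pauli group, then the cardinality of S divides 2^n; in particular |S| ≤ 2^n, so S has at most n independent generators. -/
/-!
Up to a fourth root of unity, every element of the Pauli group is one of the operators
`weylOp a b : e_w ↦ χ_b(w) e_{w + a}`, where `a, b ∈ (ℤ/2)ⁿ` and `χ_b` is the character of
`(ℤ/2)ⁿ` attached to `b` (`exists_weylForm`). Hence the Pauli group is finite, and an element with
nonzero trace must be a scalar `c • 1` with `c⁴ = 1`, because `weylOp a b` is traceless unless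
`a = b = 0` (`trace_weylOp`). If `-1 ∉ S`, then the only such scalar in `S` is `1`, since any other
fourth root of unity has `-1` among its powers. So every nonidentity element of `S` is traceless.

The average `|S|⁻¹ ∑_{s ∈ S} s` is the projection onto the space fixed by `S`, so its trace is the
dimension `d` of that space; by the previous paragraph its trace is also `2ⁿ / |S|`. Therefore
`|S| * d = 2ⁿ`.
-/

open Matrix Complex
open scoped Classical

noncomputable section

/-- The space of `n`-qubit operators. -/
abbrev MatN (n : ℕ) : Type := Matrix (Fin n → Fin 2) (Fin n → Fin 2) ℂ

/-- The Pauli matrix `X`. -/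
def PX : Matrix (Fin 2) (Fin 2) ℂ := !![0, 1; 1, 0]

/-- The Pauli matrix `Z`. -/
def PZ : Matrix (Fin 2) (Fin 2) ℂ := !![1, 0; 0, -1]

/-- The single-qubit operator `M` acting on the tensor factor `q` and as the identity on
all other factors. -/
def actQ {Q : Type*} (q : Q) (M : Matrix (Fin 2) (Fin 2) ℂ) :
    Matrix (Q → Fin 2) (Q → Fin 2) ℂ :=
  fun v w => M (v q) (w q) * (if ∀ k, k ≠ q → v k = w k then 1 else 0)

/-- The Pauli `X` operator on the `j`-th qubit. -/
def Xop (n : ℕ) (j : Fin n) : MatN n := actQ j PX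

/-- The Pauli `Z` operator on the `j`-th qubit. -/
def Zop (n : ℕ) (j : Fin n) : MatN n := actQ j PZ

/-- Generators of the Pauli group: `i • 1` and all `X_j`, `Z_j` (as units of the matrix ring). -/
def pauliGens (n : ℕ) : Set (MatN n)ˣ :=
  {u | (u : MatN n) = Complex.I • 1 ∨ (∃ j, (u : MatN n) = Xop n j) ∨
    ∃ j, (u : MatN n) = Zop n j}

/-- The `n`-qubit Pauli group `P_n`: the subgroup of the units of the matrix ring generated by
`i • 1` together with all `X_j` and `Z_j`. -/
def PauliGroup (n : ℕ) : Subgroup (MatN n)ˣ := Subgroup.closure (pauliGens n)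

/-- `X^a = ∏ⱼ X_j^(a_j)` for `a : Fin n → ZMod 2`. -/
def XpowVec (n : ℕ) (a : Fin n → ZMod 2) : MatN n :=
  (List.ofFn fun j => Xop n j ^ (a j).val).prod

/-- `Z^b = ∏ⱼ Z_j^(b_j)` for `b : Fin n → ZMod 2`. -/
def ZpowVec (n : ℕ) (b : Fin n → ZMod 2) : MatN n :=
  (List.ofFn fun j => Zop n j ^ (b j).val).prod

/-! ### Characters of `(ℤ/2)ⁿ` -/

/-- The pairing `(-1) ^ (x * y)` on `ℤ/2`, with `ℤ/2` encoded as `Fin 2`. -/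
def sgn (x y : Fin 2) : ℂ := if x = 1 ∧ y = 1 then -1 else 1

lemma sgn_add_right (x y z : Fin 2) : sgn x (y + z) = sgn x y * sgn x z := by
  fin_cases x <;> fin_cases y <;> fin_cases z <;> simp [sgn]

lemma sgn_add_left (x y z : Fin 2) : sgn (x + y) z = sgn x z * sgn y z := by
  fin_cases x <;> fin_cases y <;> fin_cases z <;> simp [sgn]

lemma sgn_sq (x y : Fin 2) : sgn x y ^ 2 = 1 := by
  unfold sgn; split_ifs <;> simp

/-- The character `χ_b(w) = (-1) ^ (b · w)` of `(ℤ/2)ⁿ`. -/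
def chi {n : ℕ} (b w : Fin n → Fin 2) : ℂ := ∏ j, sgn (b j) (w j)

lemma chi_add_right {n : ℕ} (b w a : Fin n → Fin 2) : chi b (w + a) = chi b w * chi b a := by
  simp [chi, sgn_add_right, Finset.prod_mul_distrib]

lemma chi_add_left {n : ℕ} (b c w : Fin n → Fin 2) : chi (b + c) w = chi b w * chi c w := by
  simp [chi, sgn_add_left, Finset.prod_mul_distrib]

lemma chi_sq {n : ℕ} (b w : Fin n → Fin 2) : chi b w ^ 2 = 1 := by
  simp [chi, ← Finset.prod_pow, sgn_sq]

lemma chi_zero {n : ℕ} (w : Fin n → Fin 2) : chi 0 w = 1 := by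
  simp [chi, sgn]

lemma sum_chi {n : ℕ} (b : Fin n → Fin 2) (hb : b ≠ 0) : ∑ w, chi b w = 0 := by
  obtain ⟨j, hj⟩ := Function.ne_iff.1 hb
  have hj1 : b j = 1 := by
    have := Fin.exists_fin_two.1 ⟨b j, rfl⟩
    simp only [Pi.zero_apply] at hj
    omega
  unfold chi
  rw [← Fintype.prod_sum (fun j x => sgn (b j) x)]
  apply Finset.prod_eq_zero (Finset.mem_univ j)
  simp [hj1, sgn]

/-! ### Weyl operators -/

/-- The Pauli operator `X^a Z^b` without phase: it maps the basis vector `e_w` to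
`χ_b(w) e_{w + a}`. -/
def weylOp {n : ℕ} (a b : Fin n → Fin 2) : MatN n :=
  fun v w => if v = w + a then chi b w else 0

lemma weylOp_zero {n : ℕ} : weylOp (0 : Fin n → Fin 2) 0 = 1 := by
  ext v w
  simp [weylOp, Matrix.one_apply, chi_zero]

lemma weylOp_mul {n : ℕ} (a b a' b' : Fin n → Fin 2) :
    weylOp a b * weylOp a' b' = chi b a' • weylOp (a + a') (b + b') := by
  ext v w
  simp only [Matrix.mul_apply, weylOp, Matrix.smul_apply, smul_eq_mul]
  rw [Finset.sum_eq_single (w + a')]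
  · rw [add_assoc, add_comm a' a, if_pos (rfl : w + a' = w + a')]
    split_ifs
    · rw [chi_add_right, chi_add_left]; ring
    · simp
  · intro u _ hu
    simp [hu]
  · simp

lemma add_self_fin_two {n : ℕ} (a : Fin n → Fin 2) : a + a = 0 := by
  ext j
  simp only [Pi.add_apply, Pi.zero_apply]
  generalize a j = x
  fin_cases x <;> rfl

lemma trace_weylOp {n : ℕ} (a b : Fin n → Fin 2) (h : ¬ (a = 0 ∧ b = 0)) :
    (weylOp a b).trace = 0 := by
  simp only [Matrix.trace, Matrix.diag, weylOp, left_eq_add]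
  split_ifs with ha
  · exact sum_chi b fun hb => h ⟨ha, hb⟩
  · simp

/-! ### Normal form of elements of the Pauli group -/

/-- `M` is a Weyl operator up to a fourth root of unity. -/
def IsWeylForm {n : ℕ} (M : MatN n) : Prop :=
  ∃ (c : ℂ) (a b : Fin n → Fin 2), c ^ 4 = 1 ∧ M = c • weylOp a b

lemma Xop_eq {n : ℕ} (j : Fin n) : Xop n j = weylOp (Pi.single j 1) 0 := by
  ext v w
  have key : v = w + Pi.single j 1 ↔ v j = w j + 1 ∧ ∀ k, k ≠ j → v k = w k := by
    constructor
    · rintro rfl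
      exact ⟨by simp, fun k hk => by simp [hk]⟩
    · rintro ⟨h1, h2⟩
      ext k
      by_cases hk : k = j
      · subst hk; simp [h1]
      · simp [hk, h2 k hk]
  have hX : ∀ x y : Fin 2, PX x y = if x = y + 1 then 1 else 0 := by
    intro x y
    fin_cases x <;> fin_cases y <;> simp [PX]
  simp only [Xop, actQ, weylOp, key, hX, chi_zero, ite_and]
  split_ifs <;> simp

lemma Zop_eq {n : ℕ} (j : Fin n) : Zop n j = weylOp 0 (Pi.single j 1) := by
  ext v w
  have hchi : chi (Pi.single j 1) w = sgn 1 (w j) := by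
    unfold chi
    rw [Finset.prod_eq_single j]
    · simp
    · intro k _ hk
      simp [hk, sgn]
    · simp
  have key : v = w ↔ v j = w j ∧ ∀ k, k ≠ j → v k = w k := by
    constructor
    · rintro rfl
      simp
    · rintro ⟨h1, h2⟩
      ext k
      by_cases hk : k = j
      · subst hk; simp [h1]
      · simp [h2 k hk]
  have hZ : ∀ x y : Fin 2, PZ x y = if x = y then sgn 1 y else 0 := by
    intro x y
    fin_cases x <;> fin_cases y <;> simp [PZ, sgn]
  simp only [Zop, actQ, weylOp, add_zero, key, hZ, hchi, ite_and]
  split_ifs <;> simp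

lemma exists_weylForm {n : ℕ} {u : (MatN n)ˣ} (hu : u ∈ PauliGroup n) :
    IsWeylForm (u : MatN n) := by
  unfold PauliGroup at hu
  induction hu using Subgroup.closure_induction with
  | mem x hx =>
    rcases hx with h | ⟨j, h⟩ | ⟨j, h⟩
    · exact ⟨Complex.I, 0, 0, Complex.I_pow_four, by rw [h, weylOp_zero]⟩
    · exact ⟨1, Pi.single j 1, 0, by simp, by rw [h, Xop_eq, one_smul]⟩
    · exact ⟨1, 0, Pi.single j 1, by simp, by rw [h, Zop_eq, one_smul]⟩
  | one => exact ⟨1, 0, 0, by simp, by simp [weylOp_zero]⟩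
  | mul x y _ _ hx hy =>
    obtain ⟨c, a, b, hc, h⟩ := hx
    obtain ⟨c', a', b', hc', h'⟩ := hy
    refine ⟨c * c' * chi b a', a + a', b + b', ?_, ?_⟩
    · have := chi_sq b a'
      rw [mul_pow, mul_pow, hc, hc', show 4 = 2 * 2 from rfl, pow_mul, this]
      simp
    · rw [Units.val_mul, h, h', smul_mul_smul_comm, weylOp_mul, smul_smul]
  | inv x _ hx =>
    obtain ⟨c, a, b, hc, h⟩ := hx
    have hc0 : c ≠ 0 := by rintro rfl; simp at hc
    have h2 := chi_sq b a
    refine ⟨c⁻¹ * chi b a, a, b, ?_, ?_⟩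
    · rw [mul_pow, inv_pow, hc, show 4 = 2 * 2 from rfl, pow_mul, h2]
      simp
    · -- `weylOp a b` squares to the sign `χ_b(a)`.
      apply Units.inv_eq_of_mul_eq_one_right
      rw [h, smul_mul_smul_comm, weylOp_mul, add_self_fin_two, add_self_fin_two, weylOp_zero,
        smul_smul, show c * (c⁻¹ * chi b a) * chi b a = (c * c⁻¹) * chi b a ^ 2 by ring,
        mul_inv_cancel₀ hc0, h2]
      simp

lemma finite_weylForm (n : ℕ) : {M : MatN n | IsWeylForm M}.Finite := by
  have hfin : {c : ℂ | c ^ 4 = 1}.Finite := by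
    refine ((Polynomial.nthRoots 4 (1 : ℂ)).toFinset.finite_toSet).subset fun c hc => ?_
    simpa [Polynomial.mem_nthRoots] using hc
  refine ((hfin.prod (Set.finite_univ (α := (Fin n → Fin 2) × (Fin n → Fin 2)))).image
    fun p => p.1 • weylOp p.2.1 p.2.2).subset ?_
  rintro M ⟨c, a, b, hc, rfl⟩
  exact ⟨(c, a, b), ⟨hc, trivial⟩, rfl⟩

lemma finite_of_le_pauliGroup {n : ℕ} {S : Subgroup (MatN n)ˣ} (hS : S ≤ PauliGroup n) :
    Finite S := by
  have := (finite_weylForm n).to_subtype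
  refine Finite.of_injective
    (fun s : S => (⟨_, exists_weylForm (hS s.2)⟩ : {M : MatN n | IsWeylForm M})) ?_
  intro s t h
  exact Subtype.ext (Units.ext (congrArg Subtype.val h))

/-- A nonidentity element of `S` with nonzero trace would be a scalar `c ≠ 1` with `c⁴ = 1`, and
then `c` or `c²` is `-1`. -/
lemma trace_eq_zero_of_ne_one {n : ℕ} {S : Subgroup (MatN n)ˣ} (hS : S ≤ PauliGroup n)
    (hneg : (-1 : (MatN n)ˣ) ∉ S) {u : (MatN n)ˣ} (hu : u ∈ S) (h1 : u ≠ 1) :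
    (u : MatN n).trace = 0 := by
  obtain ⟨c, a, b, hc, h⟩ := exists_weylForm (hS hu)
  by_cases hab : a = 0 ∧ b = 0
  · obtain ⟨rfl, rfl⟩ := hab
    rw [weylOp_zero] at h
    exfalso
    have hfac : (c - 1) * ((c + 1) * (c ^ 2 + 1)) = 0 := by linear_combination hc
    rcases mul_eq_zero.1 hfac with h' | h'
    · apply h1
      ext1
      rw [h, sub_eq_zero.1 h']
      simp
    rcases mul_eq_zero.1 h' with h' | h'
    · apply hneg
      convert hu
      ext1
      rw [h, eq_neg_of_add_eq_zero_left h']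
      simp
    · apply hneg
      convert S.pow_mem hu 2
      ext1
      rw [Units.val_pow_eq_pow_val, h, smul_pow, eq_neg_of_add_eq_zero_left h']
      simp
  · rw [h, Matrix.trace_smul, trace_weylOp a b hab, smul_zero]

/-! ### The averaging projection -/

/-- The tautological representation of a group of invertible matrices on column vectors. -/
def tautRep {n : ℕ} (S : Subgroup (MatN n)ˣ) : Representation ℂ S ((Fin n → Fin 2) → ℂ) :=
  ((Matrix.toLinAlgEquiv' : MatN n ≃ₐ[ℂ] _) : MatN n →* _).comp
    ((Units.coeHom (MatN n)).comp S.subtype)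

/-- The averaging projection has trace both `2 ^ n / |S|` and the dimension of the space fixed
by `S`. -/
lemma card_mul_finrank {n : ℕ} {S : Subgroup (MatN n)ˣ} (hS : S ≤ PauliGroup n)
    (hneg : (-1 : (MatN n)ˣ) ∉ S) :
    Nat.card S * Module.finrank ℂ (tautRep S).invariants = 2 ^ n := by
  have := finite_of_le_pauliGroup hS
  have := Fintype.ofFinite S
  have hcard : (Fintype.card S : ℂ) ≠ 0 := Nat.cast_ne_zero.2 Fintype.card_ne_zero
  have := invertibleOfNonzero hcard
  have htr := ((tautRep S).isProj_averageMap).trace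
  have hsum : ∑ s : S, LinearMap.trace ℂ _ (tautRep S s) = 2 ^ n := by
    have hs : ∀ s : S, LinearMap.trace ℂ _ (tautRep S s) = ((s : (MatN n)ˣ) : MatN n).trace :=
      fun s => Matrix.trace_toLin'_eq _
    rw [Finset.sum_eq_single 1]
    · simp
    · intro s _ h1
      rw [hs]
      exact trace_eq_zero_of_ne_one hS hneg s.2 fun h => h1 (Subtype.ext h)
    · simp
  have hav : LinearMap.trace ℂ _ (tautRep S).averageMap = (Fintype.card S : ℂ)⁻¹ * 2 ^ n := by
    rw [← hsum]
    simp [GroupAlgebra.average, map_sum]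
  rw [hav] at htr
  rw [Nat.card_eq_fintype_card]
  have : (Fintype.card S : ℂ) * Module.finrank ℂ (tautRep S).invariants = 2 ^ n := by
    rw [← htr, mul_inv_cancel_left₀ hcard]
  exact_mod_cast this

/-- The cardinality of a stabilizer group divides `2^n`; in particular `|S| ≤ 2^n`, so `S`
has at most `n` independent generators. -/
theorem stabilizer_card_dvd (n : ℕ) (hn : 1 ≤ n)
    (S : Subgroup (MatN n)ˣ) (hS : S ≤ PauliGroup n)
    (habel : ∀ a ∈ S, ∀ b ∈ S, a * b = b * a)
    (hneg : (-1 : (MatN n)ˣ) ∉ S) :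
    Nat.card ↥S ∣ 2 ^ n ∧ Nat.card ↥S ≤ 2 ^ n := by
  have h : Nat.card ↥S ∣ 2 ^ n := ⟨_, (card_mul_finrank hS hneg).symm⟩
  exact ⟨h, Nat.le_of_dvd (by positivity) h⟩
end
end

section
/- Let S be a stabilizer group in the n-qubit Pauli group with codespace projector Π = |S|⁻¹ • Σ_{S ∈ S} S. If E ∈ P_n anticommutes with some element of S (i.e., E ∉ N(S)), then Π * E * Π = 0; in particular, E maps the codespace into its orthogonal complement, so the error E is detectable. -/
/-! If `g ∈ S` anticommutes with `E`, then `x E y = x E (g y) = -(x g) E y = -(x E y)` for any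
`x`, `y` absorbing `g` (`x g = x`, `g y = y`), so `x E y = 0`. The projector `Π` absorbs `g` on both
sides since translation by `g` permutes `S` (`mul_codeProj`, `codeProj_mul`). A code vector `ψ`
satisfies `g ψ = ψ` by definition, and `φ† g = φ†` because Pauli operators are unitary
(`conjTranspose_of_mem_pauliGroup`), whence `g† φ = g⁻¹ φ = φ`. -/

open Matrix Complex
open scoped Classical

noncomputable section

/-- The codespace of a stabilizer group: all state vectors fixed by every stabilizer. -/
def codespace (n : ℕ) (S : Subgroup (MatN n)ˣ) : Submodule ℂ ((Fin n → Fin 2) → ℂ) where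
  carrier := {ψ | ∀ g ∈ S, (g : MatN n) *ᵥ ψ = ψ}
  add_mem' := by
    intro x y hx hy g hg
    rw [Matrix.mulVec_add, hx g hg, hy g hg]
  zero_mem' := by
    intro g hg
    rw [Matrix.mulVec_zero]
  smul_mem' := by
    intro t x hx g hg
    rw [Matrix.mulVec_smul, hx g hg]

/-- The codespace projector `Π = |S|⁻¹ • Σ_{g ∈ S} g`. -/
def codeProj (n : ℕ) (S : Subgroup (MatN n)ˣ) : MatN n :=
  (Nat.card ↥S : ℂ)⁻¹ • ∑ᶠ g ∈ (S : Set (MatN n)ˣ), (g : MatN n)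

/-- Splitting off the qubit `q`, the operator `actQ q M` is the Kronecker product `M ⊗ 1`. -/
lemma actQ_eq_kronecker {n : ℕ} (q : Fin n) (M : Matrix (Fin 2) (Fin 2) ℂ) :
    actQ q M = (kroneckerMap (· * ·) M (1 : Matrix ({k : Fin n // k ≠ q} → Fin 2) _ ℂ)).submatrix
      (Equiv.funSplitAt q (Fin 2)) (Equiv.funSplitAt q (Fin 2)) := by
  ext v w
  simp [actQ, Matrix.one_apply, funext_iff]

lemma actQ_mul {n : ℕ} (q : Fin n) (M N : Matrix (Fin 2) (Fin 2) ℂ) :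
    actQ q M * actQ q N = actQ q (M * N) := by
  rw [actQ_eq_kronecker, actQ_eq_kronecker, actQ_eq_kronecker, Matrix.submatrix_mul_equiv,
    ← Matrix.mul_kronecker_mul, Matrix.one_mul]

lemma actQ_one {n : ℕ} (q : Fin n) : actQ q (1 : Matrix (Fin 2) (Fin 2) ℂ) = 1 := by
  rw [actQ_eq_kronecker]
  simp

lemma actQ_conjTranspose {n : ℕ} (q : Fin n) (M : Matrix (Fin 2) (Fin 2) ℂ) :
    (actQ q M)ᴴ = actQ q Mᴴ := by
  rw [actQ_eq_kronecker, actQ_eq_kronecker, Matrix.conjTranspose_submatrix,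
    Matrix.conjTranspose_kronecker, Matrix.conjTranspose_one]

lemma Xop_unitary (n : ℕ) (j : Fin n) : (Xop n j)ᴴ * Xop n j = 1 := by
  have h : PXᴴ * PX = 1 := by
    ext a b
    fin_cases a <;> fin_cases b <;> simp [PX, Matrix.mul_apply]
  rw [Xop, actQ_conjTranspose, actQ_mul, h, actQ_one]

lemma Zop_unitary (n : ℕ) (j : Fin n) : (Zop n j)ᴴ * Zop n j = 1 := by
  have h : PZᴴ * PZ = 1 := by
    ext a b
    fin_cases a <;> fin_cases b <;> simp [PZ, Matrix.mul_apply]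
  rw [Zop, actQ_conjTranspose, actQ_mul, h, actQ_one]

/-- Elements of the Pauli group are unitary. -/
lemma conjTranspose_of_mem_pauliGroup {n : ℕ} {g : (MatN n)ˣ} (hg : g ∈ PauliGroup n) :
    (g : MatN n)ᴴ = ((g⁻¹ : (MatN n)ˣ) : MatN n) := by
  induction hg using Subgroup.closure_induction with
  | mem u hu =>
    refine Units.eq_inv_of_mul_eq_one_left (mul_eq_one_comm.mp ?_)
    rcases hu with h | ⟨j, h⟩ | ⟨j, h⟩
    · simp [h, Matrix.conjTranspose_smul, smul_smul]
    · rw [h, Xop_unitary]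
    · rw [h, Zop_unitary]
  | one => simp
  | mul a b _ _ ha hb => simp [Matrix.conjTranspose_mul, ha, hb]
  | inv a _ ha => rw [← ha, Matrix.conjTranspose_conjTranspose, inv_inv]

/-- The stabilizer sum as a sum over the subtype, so that it can be reindexed by translations. -/
lemma codeProj_eq {n : ℕ} (S : Subgroup (MatN n)ˣ) :
    codeProj n S = (Nat.card ↥S : ℂ)⁻¹ • ∑ᶠ s : S, ((s : (MatN n)ˣ) : MatN n) := by
  exact congrArg _ (finsum_set_coe_eq_finsum_mem _).symm

lemma mul_codeProj {n : ℕ} (S : Subgroup (MatN n)ˣ) {g : (MatN n)ˣ} (hg : g ∈ S) :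
    (g : MatN n) * codeProj n S = codeProj n S := by
  rw [codeProj_eq]
  rcases finite_or_infinite S with hfin | hinf
  · have := Fintype.ofFinite S
    rw [finsum_eq_sum_of_fintype, Matrix.mul_smul, Finset.mul_sum]
    congr 1
    exact Fintype.sum_equiv (Equiv.mulLeft (⟨g, hg⟩ : S)) _ _ fun s => by simp
  -- Here `Nat.card S = 0`, so the scalar `(Nat.card S)⁻¹` is zero.
  · simp

lemma codeProj_mul {n : ℕ} (S : Subgroup (MatN n)ˣ) {g : (MatN n)ˣ} (hg : g ∈ S) :
    codeProj n S * (g : MatN n) = codeProj n S := by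
  rw [codeProj_eq]
  rcases finite_or_infinite S with hfin | hinf
  · have := Fintype.ofFinite S
    rw [finsum_eq_sum_of_fintype, Matrix.smul_mul, Finset.sum_mul]
    congr 1
    exact Fintype.sum_equiv (Equiv.mulRight (⟨g, hg⟩ : S)) _ _ fun s => by simp
  -- Here `Nat.card S = 0`, so the scalar `(Nat.card S)⁻¹` is zero.
  · simp

/-- If a Pauli error `E` anticommutes with some element of the stabilizer group `S`
(i.e. `E ∉ N(S)`), then `Π * E * Π = 0`; in particular `E` maps the codespace into its
orthogonal complement, so the error `E` is detectable. -/
theorem anticommuting_error_detectable (n : ℕ) (hn : 1 ≤ n)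
    (S : Subgroup (MatN n)ˣ) (hS : S ≤ PauliGroup n)
    (habel : ∀ a ∈ S, ∀ b ∈ S, a * b = b * a)
    (hneg : (-1 : (MatN n)ˣ) ∉ S)
    (E : (MatN n)ˣ) (hE : E ∈ PauliGroup n)
    (hanti : ∃ g ∈ S, (E : MatN n) * (g : MatN n) = -((g : MatN n) * (E : MatN n))) :
    codeProj n S * (E : MatN n) * codeProj n S = 0 ∧
    ∀ ψ ∈ codespace n S, ∀ φ ∈ codespace n S,
      star φ ⬝ᵥ ((E : MatN n) *ᵥ ψ) = 0 := by
  obtain ⟨g, hgS, hg⟩ := hanti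
  refine ⟨?_, fun ψ hψ φ hφ => ?_⟩
  · have h : codeProj n S * (E : MatN n) * codeProj n S =
        -(codeProj n S * (E : MatN n) * codeProj n S) := by
      calc codeProj n S * (E : MatN n) * codeProj n S
          = codeProj n S * ((E : MatN n) * (g : MatN n)) * codeProj n S := by
            rw [← mul_assoc, mul_assoc _ (g : MatN n), mul_codeProj S hgS]
        _ = -(codeProj n S * g * E * codeProj n S) := by
            rw [hg, mul_neg, neg_mul, ← mul_assoc]
        _ = -(codeProj n S * (E : MatN n) * codeProj n S) := by rw [codeProj_mul S hgS]
    ext v w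
    exact self_eq_neg.mp (congrFun₂ h v w)
  · have hφg : star φ ᵥ* (g : MatN n) = star φ := by
      have h : ((g⁻¹ : (MatN n)ˣ) : MatN n) *ᵥ φ = φ := hφ _ (S.inv_mem hgS)
      rw [← conjTranspose_of_mem_pauliGroup (hS hgS)] at h
      rw [← Matrix.conjTranspose_conjTranspose (g : MatN n), ← Matrix.star_mulVec, h]
    refine self_eq_neg.mp ?_
    calc star φ ⬝ᵥ ((E : MatN n) *ᵥ ψ)
        = star φ ⬝ᵥ (((E : MatN n) * (g : MatN n)) *ᵥ ψ) := by
          rw [← Matrix.mulVec_mulVec, hψ g hgS]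
      _ = -((star φ ᵥ* (g : MatN n)) ⬝ᵥ ((E : MatN n) *ᵥ ψ)) := by
          rw [hg, Matrix.neg_mulVec, dotProduct_neg, ← Matrix.mulVec_mulVec,
            Matrix.dotProduct_mulVec]
      _ = -(star φ ⬝ᵥ ((E : MatN n) *ᵥ ψ)) := by rw [hφg]
end
end

section
/- (Abstract form of Lemma 2.) Let S be a stabilizer group in the n-qubit Pauli group and let G_1, ..., G_m ∈ P_n be such that for every nonempty subset J ⊆ {1, ..., m}, the product ∏_{j ∈ J} G_j (taken in increasing order of indices) does not lie in the centralizer N(S). Then for each i ∈ {1, ..., m} there exists a stabilizer S_i ∈ S that anticommutes with G_i (S_i * G_i = −(G_i * S_i)) and commutes with G_j for every j ≠ i. -/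
/-!
Any two elements `g`, `h` of the Pauli group commute or anticommute, because the generators do
and the property passes to products and inverses. Hence the indicator `acomm g h : ZMod 2` of
noncommutation is additive in each argument, and `g ↦ (acomm g (G j))_j` sends the stabilizer
group `S` onto a subspace `W` of `𝔽₂^m`, the space of syndromes.

If `W` were proper, some nonzero linear functional would vanish on it. A functional on `𝔽₂^m` is
`v ↦ ∑ j ∈ J, v j` for a nonempty `J`, so `∏ j ∈ J, G j` would commute with every element
of `S`, which the hypothesis on the products forbids. Therefore `W = 𝔽₂^m`, and an
element of `S` whose syndrome is the `i`-th basis vector is the required stabilizer.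
-/


open Matrix Complex
open scoped Classical

noncomputable section

/-! ### Commutation of the generators -/

/-- Left multiplication by `actQ q M` only sums over the values of the `q`-th coordinate. -/
lemma actQ_mul_apply {n : ℕ} (q : Fin n) (M : Matrix (Fin 2) (Fin 2) ℂ) (A : MatN n)
    (v w : Fin n → Fin 2) :
    (actQ q M * A) v w = ∑ x, M (v q) x * A (Function.update v q x) w := by
  rw [Matrix.mul_apply]
  symm
  refine Fintype.sum_of_injective (fun x => Function.update v q x)
    (Function.update_injective v q) _ _ ?_ ?_
  · intro u hu
    have : ¬ ∀ k, k ≠ q → v k = u k := by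
      intro h
      refine hu ⟨u q, ?_⟩
      ext k
      by_cases hk : k = q
      · subst hk; simp
      · simp [Function.update_of_ne hk, h k hk]
    simp [actQ, this]
  · intro x
    have : ∀ k, k ≠ q → v k = Function.update v q x k :=
      fun k hk => by rw [Function.update_of_ne hk]
    simp only [actQ, Function.update_self]
    rw [if_pos this, mul_one]

lemma actQ_mul_same {n : ℕ} (q : Fin n) (M N : Matrix (Fin 2) (Fin 2) ℂ) :
    (actQ q M * actQ q N : MatN n) = actQ q (M * N) := by
  ext v w
  rw [actQ_mul_apply]
  have h : ∀ x, (∀ k, k ≠ q → Function.update v q x k = w k) ↔ ∀ k, k ≠ q → v k = w k :=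
    fun x => forall₂_congr fun k hk => by rw [Function.update_of_ne hk]
  simp only [actQ, Function.update_self, h, Matrix.mul_apply, Finset.sum_mul, mul_assoc]
  refine Finset.sum_congr rfl fun x _ => ?_
  congr

/-- The entries of a product of operators on two different qubits; the formula is symmetric in
the two factors. -/
lemma actQ_mul_of_ne {n : ℕ} {p q : Fin n} (hpq : p ≠ q) (M N : Matrix (Fin 2) (Fin 2) ℂ)
    (v w : Fin n → Fin 2) :
    (actQ p M * actQ q N : MatN n) v w =
      M (v p) (w p) * N (v q) (w q) * if ∀ k, k ≠ p → k ≠ q → v k = w k then 1 else 0 := by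
  rw [actQ_mul_apply, Finset.sum_eq_single (w p)]
  · have h : (∀ k, k ≠ q → Function.update v p (w p) k = w k) ↔
        ∀ k, k ≠ p → k ≠ q → v k = w k := by
      refine forall_congr' fun k => ?_
      by_cases hk : k = p
      · subst hk; simp
      · simp [hk]
    simp only [actQ, Function.update_of_ne hpq.symm, h, mul_assoc]
  · intro x _ hx
    have h : ¬ ∀ k, k ≠ q → Function.update v p x k = w k := fun h =>
      hx (by simpa using h p hpq)
    simp only [actQ]
    rw [if_neg h, mul_zero, mul_zero]
  · simp

lemma actQ_comm_of_ne {n : ℕ} {p q : Fin n} (hpq : p ≠ q) (M N : Matrix (Fin 2) (Fin 2) ℂ) :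
    (actQ p M * actQ q N : MatN n) = actQ q N * actQ p M := by
  ext v w
  rw [actQ_mul_of_ne hpq, actQ_mul_of_ne hpq.symm, mul_comm (M _ _)]
  congr 2
  exact propext (forall_congr' fun k => forall_comm)

lemma Xop_Zop {n : ℕ} (j k : Fin n) :
    Xop n j * Zop n k = Zop n k * Xop n j ∨ Xop n j * Zop n k = -(Zop n k * Xop n j) := by
  by_cases h : j = k
  · subst h
    right
    have hXZ : PX * PZ = -(PZ * PX) := by
      ext a b
      fin_cases a <;> fin_cases b <;> simp [PX, PZ]
    rw [Xop, Zop, actQ_mul_same, actQ_mul_same, hXZ]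
    ext v w
    simp only [actQ, Matrix.neg_apply, neg_mul]
  · exact Or.inl (actQ_comm_of_ne h _ _)

lemma actQ_comm_self {n : ℕ} (j k : Fin n) (M : Matrix (Fin 2) (Fin 2) ℂ) :
    (actQ j M * actQ k M : MatN n) = actQ k M * actQ j M := by
  by_cases h : j = k
  · rw [h]
  · exact actQ_comm_of_ne h _ _

lemma pauliGens_comm_or_anticomm {n : ℕ} {a b : (MatN n)ˣ} (ha : a ∈ pauliGens n)
    (hb : b ∈ pauliGens n) : a * b = b * a ∨ a * b = -(b * a) := by
  simp only [Units.ext_iff, Units.val_mul, Units.val_neg]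
  rcases ha with ha | ⟨j, ha⟩ | ⟨j, ha⟩
  · left; simp [ha]
  · rcases hb with hb | ⟨k, hb⟩ | ⟨k, hb⟩
    · left; simp [hb]
    · left; rw [ha, hb]; exact actQ_comm_self j k _
    · rw [ha, hb]; exact Xop_Zop j k
  · rcases hb with hb | ⟨k, hb⟩ | ⟨k, hb⟩
    · left; simp [hb]
    · rw [ha, hb]
      rcases Xop_Zop k j with h | h
      · exact Or.inl h.symm
      · exact Or.inr (by rw [h, neg_neg])
    · left; rw [ha, hb]; exact actQ_comm_self j k _

/-! ### Pauli operators commute or anticommute -/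

section Sign

variable {H : Type*} [Group H] [HasDistribNeg H]

lemma comm_or_anticomm_symm {a b : H} (h : a * b = b * a ∨ a * b = -(b * a)) :
    b * a = a * b ∨ b * a = -(a * b) := by
  rcases h with h | h
  · exact Or.inl h.symm
  · exact Or.inr (by rw [h, neg_neg])

lemma comm_or_anticomm_mul_left {a b c : H} (ha : a * c = c * a ∨ a * c = -(c * a))
    (hb : b * c = c * b ∨ b * c = -(c * b)) :
    a * b * c = c * (a * b) ∨ a * b * c = -(c * (a * b)) := by
  rcases ha with ha | ha <;> rcases hb with hb | hb <;>
    simp [mul_assoc, hb, ← mul_assoc a c b, ha]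

lemma comm_or_anticomm_inv_left {a c : H} (ha : a * c = c * a ∨ a * c = -(c * a)) :
    a⁻¹ * c = c * a⁻¹ ∨ a⁻¹ * c = -(c * a⁻¹) := by
  rcases ha with ha | ha
  · left
    rw [inv_mul_eq_iff_eq_mul, ← mul_assoc, ha, mul_inv_cancel_right]
  · right
    rw [inv_mul_eq_iff_eq_mul, mul_neg, ← mul_assoc, ha, neg_mul, neg_neg, mul_inv_cancel_right]

end Sign

lemma pauli_comm_or_anticomm {n : ℕ} {a b : (MatN n)ˣ} (ha : a ∈ PauliGroup n)
    (hb : b ∈ PauliGroup n) : a * b = b * a ∨ a * b = -(b * a) := by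
  induction ha, hb using Subgroup.closure_induction₂ with
  | mem x y hx hy => exact pauliGens_comm_or_anticomm hx hy
  | one_left x _ => simp
  | one_right x _ => simp
  | mul_left x y z _ _ _ h₁ h₂ => exact comm_or_anticomm_mul_left h₁ h₂
  | mul_right x y z _ _ _ h₁ h₂ =>
    exact comm_or_anticomm_symm
      (comm_or_anticomm_mul_left (comm_or_anticomm_symm h₁) (comm_or_anticomm_symm h₂))
  | inv_left x y _ _ h => exact comm_or_anticomm_inv_left h
  | inv_right x y _ _ h =>
    exact comm_or_anticomm_symm (comm_or_anticomm_inv_left (comm_or_anticomm_symm h))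

/-! ### The commutation form -/

/-- The indicator, valued in `ZMod 2`, of `g` and `h` failing to commute; on the Pauli group this
is the symplectic form, equal to `1` exactly when `g` and `h` anticommute. -/
def acomm {n : ℕ} (g h : (MatN n)ˣ) : ZMod 2 := if g * h = h * g then 0 else 1

lemma acomm_eq_zero {n : ℕ} {g h : (MatN n)ˣ} : acomm g h = 0 ↔ g * h = h * g := by
  simp [acomm]

lemma acomm_symm {n : ℕ} (g h : (MatN n)ˣ) : acomm g h = acomm h g := by
  simp only [acomm, eq_comm]

lemma units_ne_neg {n : ℕ} (u : (MatN n)ˣ) : u ≠ -u := by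
  intro h
  have h2 : (u : MatN n) = -u := by simpa using congrArg Units.val h
  refine u.ne_zero (Matrix.ext fun v w => ?_)
  exact self_eq_neg.1 (congrFun (congrFun h2 v) w)

lemma acomm_of_anticomm {n : ℕ} {g h : (MatN n)ˣ} (H : g * h = -(h * g)) : acomm g h = 1 :=
  if_neg fun h' => units_ne_neg _ (h'.symm.trans H)

lemma acomm_mul_left {n : ℕ} {a b c : (MatN n)ˣ} (ha : a * c = c * a ∨ a * c = -(c * a))
    (hb : b * c = c * b ∨ b * c = -(c * b)) : acomm (a * b) c = acomm a c + acomm b c := by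
  rcases ha with ha | ha <;> rcases hb with hb | hb
  · rw [acomm_eq_zero.2 ha, acomm_eq_zero.2 hb, acomm_eq_zero.2, add_zero]
    rw [mul_assoc, hb, ← mul_assoc, ha, mul_assoc]
  · rw [acomm_eq_zero.2 ha, acomm_of_anticomm hb, acomm_of_anticomm, zero_add]
    rw [mul_assoc, hb, mul_neg, ← mul_assoc, ha, mul_assoc]
  · rw [acomm_of_anticomm ha, acomm_eq_zero.2 hb, acomm_of_anticomm, add_zero]
    rw [mul_assoc, hb, ← mul_assoc, ha, neg_mul, mul_assoc]
  · rw [acomm_of_anticomm ha, acomm_of_anticomm hb, acomm_eq_zero.2]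
    · decide
    · rw [mul_assoc, hb, mul_neg, ← mul_assoc, ha, neg_mul, neg_neg, mul_assoc]

lemma acomm_list_prod {n m : ℕ} {g : (MatN n)ˣ} (hg : g ∈ PauliGroup n) {G : Fin m → (MatN n)ˣ}
    (hG : ∀ i, G i ∈ PauliGroup n) (L : List (Fin m)) :
    acomm g (L.map G).prod = (L.map fun j => acomm g (G j)).sum := by
  induction L with
  | nil => simp [acomm]
  | cons j L ih =>
    have hL : (L.map G).prod ∈ PauliGroup n := by
      refine Subgroup.list_prod_mem _ fun x hx => ?_
      obtain ⟨k, -, rfl⟩ := List.mem_map.1 hx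
      exact hG k
    rw [List.map_cons, List.prod_cons, List.map_cons, List.sum_cons, acomm_symm,
      acomm_mul_left (pauli_comm_or_anticomm (hG j) hg) (pauli_comm_or_anticomm hL hg),
      acomm_symm _ g, acomm_symm _ g, ih]

/-! ### Surjectivity of the syndrome map -/

/-- Abstract form of Lemma 2: if every product of a nonempty subset of the `G_i` (in
increasing order of indices) lies outside the centralizer `N(S)`, then for each `i` there is
a stabilizer anticommuting with `G_i` and commuting with all `G_j`, `j ≠ i`. -/
theorem exists_selective_anticommuting_stabilizer (n m : ℕ) (hn : 1 ≤ n)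
    (S : Subgroup (MatN n)ˣ) (hS : S ≤ PauliGroup n)
    (habel : ∀ a ∈ S, ∀ b ∈ S, a * b = b * a)
    (hneg : (-1 : (MatN n)ˣ) ∉ S)
    (G : Fin m → (MatN n)ˣ) (hG : ∀ i, G i ∈ PauliGroup n)
    (hout : ∀ J : Finset (Fin m), J.Nonempty →
      ((J.sort (· ≤ ·)).map G).prod ∉
        PauliGroup n ⊓ Subgroup.centralizer (S : Set (MatN n)ˣ)) :
    ∀ i, ∃ g ∈ S,
      g * G i = -(G i * g) ∧ ∀ j, j ≠ i → g * G j = G j * g := by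
  intro i
  have hc : ∀ g ∈ S, ∀ j, g * G j = G j * g ∨ g * G j = -(G j * g) :=
    fun g hg j => pauli_comm_or_anticomm (hS hg) (hG j)
  -- The set of syndromes of elements of `S`, as a subspace of `𝔽₂^m`.
  let W : Submodule (ZMod 2) (Fin m → ZMod 2) :=
    AddSubgroup.toZModSubmodule 2
      { carrier := {v | ∃ g ∈ S, ∀ j, v j = acomm g (G j)}
        zero_mem' := ⟨1, S.one_mem, fun j => by simp [acomm]⟩
        add_mem' := by
          rintro v w ⟨g, hg, hv⟩ ⟨h, hh, hw⟩
          refine ⟨g * h, S.mul_mem hg hh, fun j => ?_⟩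
          rw [acomm_mul_left (hc g hg j) (hc h hh j), Pi.add_apply, hv, hw]
        neg_mem' := by
          rintro v ⟨g, hg, hv⟩
          exact ⟨g, hg, fun j => by rw [Pi.neg_apply, ZMod.neg_eq_self_mod_two, hv]⟩ }
  have hWmem : ∀ v, v ∈ W ↔ ∃ g ∈ S, ∀ j, v j = acomm g (G j) := fun v => Iff.rfl
  have htop : W = ⊤ := by
    by_contra hne
    obtain ⟨φ, hφ0, hφ⟩ := Submodule.exists_le_ker_of_lt_top W (lt_top_iff_ne_top.2 hne)
    -- The support of `φ` indexes a product of the `G j` that commutes with all of `S`.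
    let J : Finset (Fin m) := Finset.univ.filter fun j => φ (Pi.single j 1) ≠ 0
    have hφsum : ∀ v, φ v = ∑ j ∈ J, v j := by
      intro v
      rw [LinearMap.pi_apply_eq_sum_univ φ v, Finset.sum_filter]
      refine Finset.sum_congr rfl fun j _ => ?_
      have hs : (fun k => if j = k then (1 : ZMod 2) else 0) = Pi.single j 1 := by
        ext k
        simp [Pi.single_apply, eq_comm]
      rw [hs, smul_eq_mul]
      by_cases h0 : φ (Pi.single j 1) = 0
      · simp [h0]
      · have h1 : φ (Pi.single j 1) = (1 : ZMod 2) := Fin.eq_one_of_ne_zero _ h0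
        rw [if_pos h0, h1, mul_one]
    have hJ : J.Nonempty := by
      rw [Finset.nonempty_iff_ne_empty]
      intro h
      exact hφ0 (LinearMap.ext fun v => by rw [hφsum, h]; simp)
    refine hout J hJ (Subgroup.mem_inf.2 ⟨Subgroup.list_prod_mem _ ?_, ?_⟩)
    · intro x hx
      obtain ⟨j, -, rfl⟩ := List.mem_map.1 hx
      exact hG j
    · rw [Subgroup.mem_centralizer_iff]
      intro g hg
      rw [← acomm_eq_zero, acomm_list_prod (hS hg) hG]
      have hsum : ((J.sort (· ≤ ·)).map fun j => acomm g (G j)).sum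
          = ∑ j ∈ J, acomm g (G j) := by
        rw [← Multiset.sum_coe, ← Multiset.map_coe, Finset.sort_eq]
        rfl
      rw [hsum, ← hφsum fun j => acomm g (G j)]
      exact hφ ((hWmem _).2 ⟨g, hg, fun j => rfl⟩)
  obtain ⟨g, hg, hv⟩ := (hWmem (Pi.single i 1)).1 (htop ▸ Submodule.mem_top)
  refine ⟨g, hg, ?_, fun j hj => ?_⟩
  · refine (hc g hg i).resolve_left fun h => ?_
    have h1 := hv i
    rw [acomm_eq_zero.2 h] at h1
    simp at h1
  · rw [← acomm_eq_zero, ← hv j, Pi.single_eq_of_ne hj]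
end
end
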